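/- In the RSA setting with n > 10⁸, let p_j/q_j and a_j be the convergents and partial quotients of e/n, let m be the largest odd integer with p_m/q_m - e/n > 2.122·e/(n√n), set D = d/n^{1/4}, and define r = d·p_m - k·q_m, s = k·q_{m+1} - d·p_{m+1} (so k = r·p_{m+1} + s·p_m, d = r·q_{m+1} + s·q_m). If e/n - p_{m+1}/q_{m+1} > 2.122·e/(n√n), then r < √(2.122·(a_{m+3}+2))·(a_{m+2}+1)·D and s < √(2.122·(a_{m+3}+2))·D. -/

import Mathlib

/-!
Write `E_j = q_j α - p_j` for the signed error of the `j`-th convergent of `α = e/n`, and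
`γ = 2.122 e/(n√n)`. Two facts drive the proof.

* Since `p + q ≤ (3/√2) √n` and `n > 10⁸`, the RSA equation gives `0 < k - d α < d γ`
  (`rsa_error_bounds`). Hence `r < d |E_m| < d / q_{m+1} ≤ (a_{m+2} + 1) d / q_{m+2}` and
  `s < d (|E_{m+1}| + γ q_{m+1})`.
* Consecutive errors satisfy `E_{j+1} = -{α_{j+1}} E_j` (`cfErr_succ`), with
  `|E_j| q_{j+1} + |E_{j+1}| q_j = 1` as long as `E_j ≠ 0` (`cfErr_det`).

It remains to bound `1 / q_{m+2}` and `|E_{m+1}| + γ q_{m+1}` by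
`√(2.122 (a_{m+3} + 2)) / n^{1/4}`, whose square is at least `(a_{m+3} + 2) γ`. By maximality of
`m`, `|E_{m+2}| ≤ γ q_{m+2}`, and by the case hypothesis `γ q_{m+1} < |E_{m+1}|`. If
`E_{m+2} ≠ 0`, the second bound is a quadratic inequality, convex in `γ`, which holds at both
ends of the resulting interval for `γ` (`sq_bound_of_mem_interval`). If `E_{m+2} = 0`, the expansion
stops there and `a_{m+3}` takes the value `0`; then `q_{m+2}` is a denominator of `e/n`, so it is
divisible by `p` or `q`, and being at least `√(n/2)` it is large enough for both bounds.
-/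

/-- The Gauss-map orbit of `α`: `cfGauss α n` is the `n`-th complete quotient
`α_n` of the continued fraction expansion of `α` (`α_0 = α`,
`α_{n+1} = 1/(α_n - ⌊α_n⌋)`). -/
noncomputable def cfGauss (α : ℝ) : ℕ → ℝ
  | 0 => α
  | n + 1 => 1 / Int.fract (cfGauss α n)

/-- The `n`-th partial quotient `a_n` of the continued fraction expansion of `α`
(so `cfA α 0 = ⌊α⌋`). -/
noncomputable def cfA (α : ℝ) (n : ℕ) : ℤ :=
  ⌊cfGauss α n⌋

/-- `cfP α (m + 1)` is the numerator `p_m` of the `m`-th convergent of the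
continued fraction expansion of `α`; `cfP α 0 = p_{-1} = 1`, `cfP α 1 = p_0 = ⌊α⌋`,
and `p_i = a_i p_{i-1} + p_{i-2}`.  (For rational `α` the values stabilize once
the expansion terminates.) -/
noncomputable def cfP (α : ℝ) : ℕ → ℤ
  | 0 => 1
  | 1 => ⌊α⌋
  | n + 2 =>
      if Int.fract (cfGauss α n) = 0 then cfP α (n + 1)
      else cfA α (n + 1) * cfP α (n + 1) + cfP α n

/-- `cfQ α (m + 1)` is the denominator `q_m` of the `m`-th convergent of the
continued fraction expansion of `α`; `cfQ α 0 = q_{-1} = 0`, `cfQ α 1 = q_0 = 1`,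
and `q_i = a_i q_{i-1} + q_{i-2}`. -/
noncomputable def cfQ (α : ℝ) : ℕ → ℤ
  | 0 => 0
  | 1 => 1
  | n + 2 =>
      if Int.fract (cfGauss α n) = 0 then cfQ α (n + 1)
      else cfA α (n + 1) * cfQ α (n + 1) + cfQ α n

/-- The signed error `E_{j-1} = q_{j-1} α - p_{j-1}`, with the same index shift as `cfP` and `cfQ`. -/
noncomputable def cfErr (α : ℝ) (j : ℕ) : ℝ := (cfQ α j : ℝ) * α - (cfP α j : ℝ)

/-- This needs no assumption on termination: once the expansion has stopped, both sides are `0`. -/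
lemma cfErr_succ (α : ℝ) (j : ℕ) :
    cfErr α (j + 1) = -Int.fract (cfGauss α j) * cfErr α j := by
  induction j with
  | zero => simp [cfErr, cfP, cfQ, cfGauss]
  | succ j ih =>
    by_cases h : Int.fract (cfGauss α j) = 0
    · have h1 : cfErr α (j + 1) = 0 := by rw [ih, h]; simp
      have h2 : cfErr α (j + 1 + 1) = cfErr α (j + 1) := by simp [cfErr, cfP, cfQ, h]
      rw [h2, h1, mul_zero]
    · have h2 : cfErr α (j + 1 + 1) = cfA α (j + 1) * cfErr α (j + 1) + cfErr α j := by
        simp only [cfErr, cfP, cfQ, h, if_false]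
        push_cast
        ring
      have h3 : cfErr α j = -cfGauss α (j + 1) * cfErr α (j + 1) := by
        rw [ih, cfGauss]
        field_simp
      rw [h2, Int.fract, cfA]
      linear_combination h3

lemma cfErr_ne_zero_of_succ {α : ℝ} {j : ℕ} (h : cfErr α (j + 1) ≠ 0) :
    Int.fract (cfGauss α j) ≠ 0 ∧ cfErr α j ≠ 0 := by
  rw [cfErr_succ] at h
  constructor <;> (intro h0; apply h; rw [h0]; simp)

lemma one_le_cfA_succ {α : ℝ} {j : ℕ} (h : Int.fract (cfGauss α j) ≠ 0) :
    1 ≤ cfA α (j + 1) := by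
  have h0 : 0 < Int.fract (cfGauss α j) := lt_of_le_of_ne (Int.fract_nonneg _) (Ne.symm h)
  rw [cfA, Int.le_floor, cfGauss, le_div_iff₀ h0]
  have := (Int.fract_lt_one (cfGauss α j)).le
  simpa using this

lemma cfQ_nonneg_and_pos (α : ℝ) (j : ℕ) : 0 ≤ cfQ α j ∧ 1 ≤ cfQ α (j + 1) := by
  induction j with
  | zero => simp [cfQ]
  | succ j ih =>
    refine ⟨by linarith [ih.2], ?_⟩
    rw [cfQ]
    split_ifs with h
    · exact ih.2
    · nlinarith [one_le_cfA_succ h, ih.1, ih.2]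

lemma cfQ_le_succ (α : ℝ) (j : ℕ) : cfQ α j ≤ cfQ α (j + 1) := by
  cases j with
  | zero => simp [cfQ]
  | succ j =>
    have h1 := cfQ_nonneg_and_pos α j
    rw [cfQ]
    split_ifs with h
    · exact le_rfl
    · nlinarith [one_le_cfA_succ h, h1.1, h1.2]

/-- The determinant identity `p_{j-1} q_j - p_j q_{j-1} = ± 1`, expressed through the errors. -/
lemma cfErr_det (α : ℝ) (j : ℕ) (h : cfErr α j ≠ 0) :
    cfErr α j * cfQ α (j + 1) - cfErr α (j + 1) * cfQ α j = (-1) ^ (j + 1) := by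
  induction j with
  | zero => simp [cfErr, cfP, cfQ]
  | succ j ih =>
    obtain ⟨hf, hj⟩ := cfErr_ne_zero_of_succ h
    have h2 : cfErr α (j + 1 + 1) = cfA α (j + 1) * cfErr α (j + 1) + cfErr α j := by
      simp only [cfErr, cfP, cfQ, hf, if_false]
      push_cast
      ring
    have h3 : (cfQ α (j + 1 + 1) : ℝ) = cfA α (j + 1) * cfQ α (j + 1) + cfQ α j := by
      rw [cfQ, if_neg hf]
      push_cast
      ring
    rw [h2, h3, pow_succ, ← ih hj]
    ring

/-- The fraction `k / d` lies just above `e / n`: `0 < k - d e / n < d · 2.122 e / (n √n)`. -/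
lemma rsa_error_bounds (p q n e d k : ℕ) (hp : p.Prime) (hq : q.Prime)
    (hpq : p < q) (hqp : q < 2 * p) (hn : n = p * q) (hbig : n > 10 ^ 8) (hk : 0 < k)
    (hkey : e * d = k * ((p - 1) * (q - 1)) + 1) :
    0 < (k : ℝ) - d * ((e : ℝ) / n) ∧
      (k : ℝ) - d * ((e : ℝ) / n) < d * (2.122 * e / ((n : ℝ) * Real.sqrt n)) := by
  have hp2 : (2 : ℝ) ≤ p := by exact_mod_cast hp.two_le
  have hq2 : (2 : ℝ) ≤ q := by exact_mod_cast hq.two_le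
  have hpq' : (p : ℝ) < q := by exact_mod_cast hpq
  have hqp' : (q : ℝ) < 2 * p := by exact_mod_cast hqp
  have hn' : (n : ℝ) = p * q := by exact_mod_cast hn
  have hbig' : (10 : ℝ) ^ 8 < n := by exact_mod_cast hbig
  have hk' : (1 : ℝ) ≤ k := by exact_mod_cast hk
  have hkey' : (e : ℝ) * d = k * ((p - 1) * (q - 1)) + 1 := by
    have h := congrArg (Nat.cast : ℕ → ℝ) hkey
    push_cast [Nat.cast_sub hp.one_le, Nat.cast_sub hq.one_le] at h
    exact h
  have hn0 : (0 : ℝ) < n := by linarith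
  obtain ⟨z, hz⟩ : ∃ z, z = Real.sqrt n := ⟨_, rfl⟩
  have hz2 : z * z = n := by rw [hz]; exact Real.mul_self_sqrt hn0.le
  have hz4 : (10 : ℝ) ^ 4 < z := by
    rw [hz]
    apply Real.lt_sqrt_of_sq_lt
    linarith
  have hz0 : 0 < z := by linarith
  rw [← hz]
  have hnk : (k : ℝ) - d * ((e : ℝ) / n) = (k * (p + q - 1) - 1) / n := by
    field_simp
    linear_combination k * hn' - hkey'
  constructor
  · rw [hnk]
    apply div_pos _ hn0
    nlinarith
  -- `2.1214` exceeds `3 / √2`, the largest value of `(p + q) / √(p q)` for `p < q < 2 p`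
  have hS : (p + q : ℝ) ≤ 2.1214 * z := by
    refine abs_le_of_sq_le_sq' ?_ (by linarith) |>.2
    nlinarith [mul_pos (sub_pos.2 hqp') (sub_pos.2 hpq')]
  have hphi : z * (p + q - 1) ≤ 2.122 * ((p - 1) * (q - 1) : ℝ) := by
    have h1 : ((p - 1) * (q - 1) : ℝ) = z * z - (p + q) + 1 := by rw [hz2, hn']; ring
    rw [h1]
    nlinarith
  have hgoal : (d : ℝ) * (2.122 * e / (n * z)) = (2.122 * (e * d) / z) / n := by
    field_simp
  rw [hnk, hgoal]
  apply div_lt_div_of_pos_right _ hn0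
  rw [lt_div_iff₀ hz0, hkey']
  nlinarith [mul_le_mul_of_nonneg_left hphi (by linarith : (0 : ℝ) ≤ k)]

/-- Here `x, y` stand for `q_{m+1}, q_{m+2}`, `h` for `|E_{m+1}|` and `u` for the ratio
`|E_{m+2}| / |E_{m+1}|`. Both ends of the interval for `g` satisfy the inequality, and the
difference of the two sides is convex in `g`. -/
lemma sq_bound_of_mem_interval {x y h u g A : ℝ} (hx : 0 < x) (hxy : x ≤ y) (hh : 0 < h)
    (hu : 0 < u) (hdet : h * y + u * h * x = 1) (hA : 1 ≤ A) (hAu : 1 ≤ u * (A + 1))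
    (hg1 : u * h ≤ g * y) (hg2 : g * x ≤ h) :
    (h + g * x) ^ 2 ≤ (A + 2) * g ∧ (1 / y) ^ 2 ≤ (A + 2) * g := by
  have hy : 0 < y := by linarith
  obtain ⟨t, ht⟩ : ∃ t, x = t * y := ⟨x / y, by field_simp⟩
  obtain ⟨c, hc⟩ : ∃ c, g * y = c * h := ⟨g * y / h, by field_simp⟩
  have ht0 : 0 < t := by
    rw [ht] at hx
    exact pos_of_mul_pos_left hx hy.le
  have ht1 : t ≤ 1 := by
    rw [ht] at hxy
    nlinarith
  have hcu : u ≤ c := by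
    rw [hc] at hg1
    exact le_of_mul_le_mul_right hg1 hh
  have hct : c * t ≤ 1 := by
    have h1 : c * t * h ≤ 1 * h := by
      calc c * t * h = g * x := by rw [ht]; linear_combination (-t) * hc
        _ ≤ 1 * h := by linarith
    exact le_of_mul_le_mul_right h1 hh
  have hdet' : h * y * (1 + u * t) = 1 := by rw [ht] at hdet; linarith
  have hgx : g * x = c * t * h := by rw [ht]; linear_combination t * hc
  have hg : g = c * h ^ 2 * (1 + u * t) := by
    have h1 : g * y = c * h ^ 2 * (1 + u * t) * y := by
      rw [hc]
      linear_combination (-(c * h)) * hdet'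
    exact mul_right_cancel₀ hy.ne' h1
  have hut : 0 < u * t := mul_pos hu ht0
  constructor
  · -- the chord above the convex quadratic, from `(c - u) (1 - c t) ≥ 0`
    have hchord : (1 + c * t) ^ 2 ≤ (1 - u * t) + c * t * (3 + u * t) := by
      nlinarith [mul_nonneg ht0.le (mul_nonneg (sub_nonneg.2 hcu) (sub_nonneg.2 hct))]
    have hend : 1 + u * t ≤ (A + 2) * u := by nlinarith
    have hslope : t * (3 + u * t) ≤ (A + 2) * (1 + u * t) := by nlinarith
    have hq : (1 + c * t) ^ 2 ≤ (A + 2) * (c * (1 + u * t)) := by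
      nlinarith [mul_le_mul_of_nonneg_left hslope (sub_nonneg.2 hcu),
        mul_le_mul_of_nonneg_left hend (by linarith : 0 ≤ 1 + u * t)]
    rw [hgx, hg]
    nlinarith [mul_le_mul_of_nonneg_left hq (sq_nonneg h)]
  · have hy' : 1 / y = h * (1 + u * t) := by
      rw [div_eq_iff hy.ne']
      linarith
    have hend : 1 + u * t ≤ (A + 2) * c := by nlinarith
    rw [hy', hg]
    nlinarith [mul_le_mul_of_nonneg_left hend
      (mul_nonneg (sq_nonneg h) (by linarith : 0 ≤ 1 + u * t))]

/-- If `Q α` is an integer then `Q` shares a prime factor with `n`, hence `Q ≥ p ≥ √(n / 2)`. -/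
lemma denominator_large (p q n e : ℕ) (hp : p.Prime) (hq : q.Prime)
    (hpq : p < q) (hqp : q < 2 * p) (hn : n = p * q) (he : 0 < e) (hen : e < n)
    (P Q : ℤ) (hQ : 0 < Q) (h : (Q : ℝ) * ((e : ℝ) / n) - P = 0) :
    (n : ℝ) ≤ 2 * (Q : ℝ) ^ 2 := by
  have hn0 : (n : ℝ) ≠ 0 := by
    have : n ≠ 0 := by omega
    exact_mod_cast this
  have h1 : Q * (e : ℤ) = P * n := by
    have h2 : (Q : ℝ) * e = P * n := by
      field_simp at h
      linarith
    exact_mod_cast h2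
  obtain ⟨N, rfl⟩ := Int.eq_ofNat_of_zero_le hQ.le
  have hdvd : n ∣ N * e := by
    have : (n : ℤ) ∣ ((N * e : ℕ) : ℤ) := ⟨P, by push_cast; linarith⟩
    exact_mod_cast this
  have hN0 : 0 < N := by exact_mod_cast hQ
  have hpN : p ≤ N := by
    by_contra hlt
    have h1 : Nat.Coprime p N :=
      (Nat.Prime.coprime_iff_not_dvd hp).2 fun h => hlt (Nat.le_of_dvd hN0 h)
    have h2 : Nat.Coprime q N :=
      (Nat.Prime.coprime_iff_not_dvd hq).2 fun h => hlt (by linarith [Nat.le_of_dvd hN0 h])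
    have h3 : Nat.Coprime n N := by rw [hn]; exact Nat.Coprime.mul_left h1 h2
    exact absurd (Nat.le_of_dvd he (h3.dvd_of_dvd_mul_left hdvd)) (by omega)
  have h3 : n ≤ 2 * N ^ 2 := by rw [hn]; nlinarith
  have h4 : (n : ℝ) ≤ 2 * (N : ℝ) ^ 2 := by exact_mod_cast h3
  simpa using h4

/-- In the RSA setting with `n > 10⁸`, let `p_j/q_j`, `a_j`
be the convergents and partial quotients of `e/n`, let `m` be the largest odd
integer with `p_m/q_m - e/n > 2.122 e/(n√n)`, `D = d/n^{1/4}`, and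
`r = d p_m - k q_m`, `s = k q_{m+1} - d p_{m+1}`.  If
`e/n - p_{m+1}/q_{m+1} > 2.122 e/(n√n)`, then
`r < √(2.122 (a_{m+3} + 2)) (a_{m+2} + 1) D` and `s < √(2.122 (a_{m+3} + 2)) D`.
(Here `p_m = cfP (e/n) (m + 1)`, `p_{m+1} = cfP (e/n) (m + 2)`,
`a_j = cfA (e/n) j`.) -/
theorem vvt_bounds_case_one (p q n e d k : ℕ) (hp : p.Prime) (hq : q.Prime)
    (hpq : p < q) (hqp : q < 2 * p) (hn : n = p * q) (hbig : n > 10 ^ 8)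
    (he : 0 < e) (hd : 0 < d) (hk : 0 < k) (hen : e < n)
    (hkd : Nat.Coprime k d)
    (hkey : e * d = k * ((p - 1) * (q - 1)) + 1)
    (m : ℕ) (hmodd : Odd m)
    (hm : (cfP ((e : ℝ) / n) (m + 1) : ℝ) / (cfQ ((e : ℝ) / n) (m + 1) : ℝ) - (e : ℝ) / n > 2.122 * e / ((n : ℝ) * Real.sqrt n))
    (hmax : ∀ m' : ℕ, Odd m' → ((cfP ((e : ℝ) / n) (m' + 1) : ℝ) / (cfQ ((e : ℝ) / n) (m' + 1) : ℝ) - (e : ℝ) / n > 2.122 * e / ((n : ℝ) * Real.sqrt n)) → m' ≤ m)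
    (D : ℝ) (hD : D = (d : ℝ) / (n : ℝ) ^ ((1 : ℝ) / 4))
    (r s : ℤ)
    (hr : r = (d : ℤ) * cfP ((e : ℝ) / n) (m + 1) - (k : ℤ) * cfQ ((e : ℝ) / n) (m + 1))
    (hs : s = (k : ℤ) * cfQ ((e : ℝ) / n) (m + 2) - (d : ℤ) * cfP ((e : ℝ) / n) (m + 2))
    (hcase : (e : ℝ) / n - (cfP ((e : ℝ) / n) (m + 2) : ℝ) / (cfQ ((e : ℝ) / n) (m + 2) : ℝ) >
      2.122 * e / ((n : ℝ) * Real.sqrt n)) :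
    (r : ℝ) < Real.sqrt (2.122 * ((cfA ((e : ℝ) / n) (m + 3) : ℝ) + 2)) *
        ((cfA ((e : ℝ) / n) (m + 2) : ℝ) + 1) * D ∧
      (s : ℝ) < Real.sqrt (2.122 * ((cfA ((e : ℝ) / n) (m + 3) : ℝ) + 2)) * D := by
  obtain ⟨hlow, hup⟩ := rsa_error_bounds p q n e d k hp hq hpq hqp hn hbig hk hkey
  have hn1 : (1 : ℝ) < n := by
    have : (10 : ℝ) ^ 8 < n := by exact_mod_cast hbig
    linarith
  have hn0 : (0 : ℝ) < n := by linarith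
  have he0 : (0 : ℝ) < e := by exact_mod_cast he
  have hd0 : (0 : ℝ) < d := by exact_mod_cast hd
  have hen' : (e : ℝ) < n := by exact_mod_cast hen
  have hz0 : 0 < Real.sqrt n := Real.sqrt_pos.2 hn0
  have hmax2 := mt (hmax (m + 2) (by
    obtain ⟨i, rfl⟩ := hmodd
    exact ⟨i + 1, by ring⟩)) (by omega)
  have hden := fun hQ h => denominator_large p q n e hp hq hpq hqp hn he hen
    (cfP ((e : ℝ) / n) (m + 3)) (cfQ ((e : ℝ) / n) (m + 3)) hQ h
  -- `2.122 / √n` exceeds `γ` because `e < n`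
  have hgz : 2.122 * e / ((n : ℝ) * Real.sqrt n) * Real.sqrt n ≤ 2.122 := by
    have h1 : 2.122 * e / ((n : ℝ) * Real.sqrt n) * Real.sqrt n = 2.122 * (e / n) := by
      field_simp
    have h2 : (e : ℝ) / n ≤ 1 := (div_le_one hn0).2 hen'.le
    rw [h1]
    linarith
  have hg0 : 0 < 2.122 * e / ((n : ℝ) * Real.sqrt n) := by positivity
  generalize 2.122 * (e : ℝ) / ((n : ℝ) * Real.sqrt n) = g at *
  generalize (e : ℝ) / n = α at *
  have hQ0 : (1 : ℝ) ≤ cfQ α (m + 1) := by exact_mod_cast (cfQ_nonneg_and_pos α m).2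
  have hQ1 : (1 : ℝ) ≤ cfQ α (m + 2) := by exact_mod_cast (cfQ_nonneg_and_pos α (m + 1)).2
  have hQ2 : (1 : ℝ) ≤ cfQ α (m + 3) := by exact_mod_cast (cfQ_nonneg_and_pos α (m + 2)).2
  have hQ01 : (cfQ α (m + 1) : ℝ) ≤ cfQ α (m + 2) := by exact_mod_cast cfQ_le_succ α (m + 1)
  have hQ12 : (cfQ α (m + 2) : ℝ) ≤ cfQ α (m + 3) := by exact_mod_cast cfQ_le_succ α (m + 2)
  have hE1 : g * cfQ α (m + 2) < cfErr α (m + 2) := by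
    have h1 : α - (cfP α (m + 2) : ℝ) / cfQ α (m + 2) = cfErr α (m + 2) / cfQ α (m + 2) := by
      have : (cfQ α (m + 2) : ℝ) ≠ 0 := by linarith
      rw [cfErr]
      field_simp
    rw [h1, gt_iff_lt, lt_div_iff₀ (by linarith)] at hcase
    exact hcase
  have hE2 : -cfErr α (m + 3) ≤ g * cfQ α (m + 3) := by
    have h1 : (cfP α (m + 3) : ℝ) / cfQ α (m + 3) - α = -cfErr α (m + 3) / cfQ α (m + 3) := by
      have : (cfQ α (m + 3) : ℝ) ≠ 0 := by linarith
      rw [cfErr]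
      field_simp
      ring
    have h2 := not_lt.1 hmax2
    change (cfP α (m + 3) : ℝ) / cfQ α (m + 3) - α ≤ g at h2
    rw [h1, div_le_iff₀ (by linarith)] at h2
    exact h2
  have hE1pos : 0 < cfErr α (m + 2) := lt_trans (by positivity) hE1
  obtain ⟨hf1, hE0ne⟩ := cfErr_ne_zero_of_succ hE1pos.ne'
  have hdet1 : -cfErr α (m + 1) * cfQ α (m + 2) + cfErr α (m + 2) * cfQ α (m + 1) = 1 := by
    have h := cfErr_det α (m + 1) hE0ne
    rw [(by exact hmodd.add_odd odd_one |>.add_one : Odd (m + 1 + 1)).neg_one_pow] at h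
    linarith
  have hdet2 : cfErr α (m + 2) * cfQ α (m + 3) - cfErr α (m + 3) * cfQ α (m + 2) = 1 := by
    have h := cfErr_det α (m + 2) hE1pos.ne'
    rw [(by
      obtain ⟨i, rfl⟩ := hmodd
      exact ⟨i + 2, by ring⟩ : Even (m + 2 + 1)).neg_one_pow] at h
    exact h
  have hrec : (cfQ α (m + 3) : ℝ) = cfA α (m + 2) * cfQ α (m + 2) + cfQ α (m + 1) := by
    rw [cfQ, if_neg hf1]
    push_cast
    ring
  have hE2eq := cfErr_succ α (m + 2)
  have hrlt : (r : ℝ) < d * -cfErr α (m + 1) := by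
    have h1 := mul_pos hlow (by linarith : (0 : ℝ) < cfQ α (m + 1))
    rw [hr, cfErr]
    push_cast
    linarith
  have hslt : (s : ℝ) < d * (cfErr α (m + 2) + g * cfQ α (m + 2)) := by
    have h1 := mul_lt_mul_of_pos_right hup (by linarith : (0 : ℝ) < cfQ α (m + 2))
    rw [hs, cfErr]
    push_cast
    linarith
  have hkeyBounds :
      (cfErr α (m + 2) + g * cfQ α (m + 2)) ^ 2 * Real.sqrt n
          ≤ 2.122 * ((cfA α (m + 3) : ℝ) + 2) ∧
        (1 / (cfQ α (m + 3) : ℝ)) ^ 2 * Real.sqrt n ≤ 2.122 * ((cfA α (m + 3) : ℝ) + 2) := by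
    by_cases hu : Int.fract (cfGauss α (m + 2)) = 0
    · -- the expansion stops at `q_{m+2}`, and `1 / 0 = 0` makes `a_{m+3} = 0`
      have hA : cfA α (m + 3) = 0 := by
        rw [cfA, cfGauss, hu]
        simp
      have hE20 : cfErr α (m + 3) = 0 := by rw [hE2eq, hu]; simp
      have hbigQ := hden (by exact_mod_cast (by linarith : (0 : ℝ) < cfQ α (m + 3))) hE20
      have hE1eq : cfErr α (m + 2) = 1 / cfQ α (m + 3) := by
        rw [eq_div_iff (by linarith)]
        rw [hE20] at hdet2
        linarith
      have hzz : Real.sqrt n * Real.sqrt n = n := Real.mul_self_sqrt hn0.le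
      have hz4 : (10 : ℝ) ^ 4 < Real.sqrt n := by
        apply Real.lt_sqrt_of_sq_lt
        have : (10 : ℝ) ^ 8 < n := by exact_mod_cast hbig
        linarith
      have hsmall : (1 / (cfQ α (m + 3) : ℝ)) ^ 2 * Real.sqrt n ≤ 1 := by
        rw [div_pow, one_pow, one_div_mul_eq_div, div_le_one (by positivity)]
        have h1 : 2 * Real.sqrt n ≤ Real.sqrt n * Real.sqrt n :=
          mul_le_mul_of_nonneg_right (by linarith) hz0.le
        linarith
      rw [hA]
      push_cast
      constructor
      · have h1 : (cfErr α (m + 2) + g * cfQ α (m + 2)) ^ 2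
            ≤ 4 * (1 / (cfQ α (m + 3) : ℝ)) ^ 2 := by
          rw [← hE1eq]
          have h2 : 0 < g * cfQ α (m + 2) := mul_pos hg0 (by linarith)
          calc (cfErr α (m + 2) + g * cfQ α (m + 2)) ^ 2 ≤ (2 * cfErr α (m + 2)) ^ 2 :=
                pow_le_pow_left₀ (by linarith) (by linarith) 2
            _ = 4 * cfErr α (m + 2) ^ 2 := by ring
        have h2 := mul_le_mul_of_nonneg_right h1 hz0.le
        linarith
      · linarith
    · have hu0 : 0 < Int.fract (cfGauss α (m + 2)) :=
        lt_of_le_of_ne (Int.fract_nonneg _) (Ne.symm hu)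
      have hA1 : (1 : ℝ) ≤ cfA α (m + 3) := by exact_mod_cast one_le_cfA_succ hu
      have hAu : 1 ≤ Int.fract (cfGauss α (m + 2)) * ((cfA α (m + 3) : ℝ) + 1) := by
        have h1 := (Int.lt_floor_add_one (cfGauss α (m + 3))).le
        rw [← cfA] at h1
        have h2 : Int.fract (cfGauss α (m + 2)) * cfGauss α (m + 3) = 1 :=
          mul_one_div_cancel hu
        have h3 := mul_le_mul_of_nonneg_left h1 hu0.le
        rwa [h2] at h3
      obtain ⟨h1, h2⟩ := sq_bound_of_mem_interval (by linarith) hQ12 hE1pos hu0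
        (by rw [hE2eq] at hdet2; linarith) hA1 hAu (by rw [hE2eq] at hE2; linarith) hE1.le
      have h3 : ((cfA α (m + 3) : ℝ) + 2) * g * Real.sqrt n
          ≤ 2.122 * ((cfA α (m + 3) : ℝ) + 2) := by
        have h4 := mul_le_mul_of_nonneg_left hgz (by linarith : 0 ≤ (cfA α (m + 3) : ℝ) + 2)
        linarith
      exact ⟨(mul_le_mul_of_nonneg_right h1 hz0.le).trans h3,
        (mul_le_mul_of_nonneg_right h2 hz0.le).trans h3⟩
  obtain ⟨w, hw⟩ : ∃ w, w = (n : ℝ) ^ ((1 : ℝ) / 4) := ⟨_, rfl⟩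
  have hw0 : 0 < w := by rw [hw]; positivity
  have hw2 : w ^ 2 = Real.sqrt n := by
    rw [hw, Real.sqrt_eq_rpow, ← Real.rpow_natCast, ← Real.rpow_mul hn0.le]
    norm_num
  have hroot : ∀ y X : ℝ, y ^ 2 * Real.sqrt n ≤ X → d * y ≤ Real.sqrt X * D := by
    intro y X hyX
    have h1 : y * w ≤ Real.sqrt X := by
      apply Real.le_sqrt_of_sq_le
      rw [mul_pow, hw2]
      exact hyX
    rw [hD, ← hw, mul_div_assoc', le_div_iff₀ hw0]
    linarith [mul_le_mul_of_nonneg_left h1 hd0.le]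
  refine ⟨?_, hslt.trans_le (hroot _ _ hkeyBounds.1)⟩
  have hA2 : (1 : ℝ) ≤ cfA α (m + 2) := by exact_mod_cast one_le_cfA_succ hf1
  have hE0 : -cfErr α (m + 1) ≤ 1 / cfQ α (m + 3) * ((cfA α (m + 2) : ℝ) + 1) := by
    have h1 : -cfErr α (m + 1) ≤ 1 / cfQ α (m + 2) := by
      have h0 : 0 < cfErr α (m + 2) * cfQ α (m + 1) := mul_pos hE1pos (by linarith)
      rw [le_div_iff₀ (by linarith)]
      linarith
    have h2 : 1 / (cfQ α (m + 2) : ℝ) ≤ 1 / cfQ α (m + 3) * ((cfA α (m + 2) : ℝ) + 1) := by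
      rw [one_div_mul_eq_div, div_le_div_iff₀ (by linarith) (by linarith)]
      linarith
    exact h1.trans h2
  calc (r : ℝ) < d * -cfErr α (m + 1) := hrlt
    _ ≤ d * (1 / cfQ α (m + 3) * ((cfA α (m + 2) : ℝ) + 1)) :=
        mul_le_mul_of_nonneg_left hE0 hd0.le
    _ = (d * (1 / cfQ α (m + 3))) * ((cfA α (m + 2) : ℝ) + 1) := by ring
    _ ≤ (Real.sqrt (2.122 * ((cfA α (m + 3) : ℝ) + 2)) * D) * ((cfA α (m + 2) : ℝ) + 1) :=
        mul_le_mul_of_nonneg_right (hroot _ _ hkeyBounds.2) (by linarith)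
    _ = _ := by ring
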